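/- The bihomogeneous polynomial F_{Z(H₃)} ∈ ℂ[a,b,c,x,y,z] is nonzero and has multiplicity at least 5 at the general point: for every multi-index (α₁,α₂,α₃) of non-negative integers with α₁+α₂+α₃ ≤ 4, the partial derivative ∂^{α₁+α₂+α₃}F_{Z(H₃)}/∂x^{α₁}∂y^{α₂}∂z^{α₃}, evaluated at (x,y,z) = (a,b,c), is the zero polynomial in ℂ[a,b,c]. (Thus for each (a:b:c) the sextic F_{Z(H₃)}((a:b:c),(x:y:z)) is the unexpected curve of degree 6 with a point of multiplicity 5 at (a:b:c).) -/

import Mathlib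

open MvPolynomial

/-- `ℂ[a,b,c]`, the ring of coefficients (polynomials in the coordinates of the general
point `P = (a:b:c)`). -/
noncomputable abbrev Qabc : Type := MvPolynomial (Fin 3) ℂ

/-- `ℂ[a,b,c][x,y,z]`, the ring in which the bihomogeneous form `F_{Z(H₃)}` lives. -/
noncomputable abbrev Sxyz : Type := MvPolynomial (Fin 3) Qabc

/-- The six linear forms `L₁, …, L₆` of the `H₃` configuration, in the variables `x,y,z`. -/
noncomputable def H3L (u : ℂ) : Fin 6 → Sxyz :=
  ![X 1 - C (C (u - 1)) * X 2, X 1 + C (C (u - 1)) * X 2,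
    X 0 - C (C u) * X 2, X 0 + C (C u) * X 2,
    X 0 - C (C (u - 1)) * X 1, X 0 + C (C (u - 1)) * X 1]

/-- The six quintics `fᵢ = ∏_{j ≠ i} Lⱼ`. -/
noncomputable def H3f (u : ℂ) (i : Fin 6) : Sxyz :=
  ∏ j ∈ Finset.univ.erase i, H3L u j

/-- The Galois-conjugate lines `M₁ = y + uz`, `M₂ = y − uz`, `M₃ = x − (1−u)z`,
`M₄ = x + (1−u)z`, `M₅ = x + uy`, `M₆ = x − uy`. -/
noncomputable def H3M (u : ℂ) : Fin 6 → Sxyz :=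
  ![X 1 + C (C u) * X 2, X 1 - C (C u) * X 2,
    X 0 - C (C (1 - u)) * X 2, X 0 + C (C (1 - u)) * X 2,
    X 0 + C (C u) * X 1, X 0 - C (C u) * X 1]

/-- The twelve quintics `q₁, …, q₁₂` in `ℂ[a,b,c]` (with `a = X 0`, `b = X 1`, `c = X 2`). -/
noncomputable def H3q (u : ℂ) : Fin 12 → Qabc :=
  ![X 0 * (X 1 - C (u-1) * X 2)^4, (X 1 + C u * X 2) * (X 1 - C (u-1) * X 2)^4,
    X 0 * (X 1 + C (u-1) * X 2)^4, (X 1 - C u * X 2) * (X 1 + C (u-1) * X 2)^4,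
    X 1 * (X 0 - C u * X 2)^4, (X 0 + C (u-1) * X 2) * (X 0 - C u * X 2)^4,
    X 1 * (X 0 + C u * X 2)^4, (X 0 - C (u-1) * X 2) * (X 0 + C u * X 2)^4,
    X 2 * (X 0 - C (u-1) * X 1)^4, (X 0 + C u * X 1) * (X 0 - C (u-1) * X 1)^4,
    X 2 * (X 0 + C (u-1) * X 1)^4, (X 0 - C u * X 1) * (X 0 + C (u-1) * X 1)^4]

/-- The bihomogeneous polynomial `F_{Z(H₃)} ∈ ℂ[a,b,c][x,y,z]` cutting out the unexpected
sextic with a quintuple point at the general point `(a:b:c)`. -/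
noncomputable def H3F (u : ℂ) : Sxyz :=
  C (C ((1:ℂ)/2)) *
    ( C (C (3*u+1)) * (H3M u 0 * H3f u 0 * C (H3q u 0) - X 0 * H3f u 0 * C (H3q u 1)
        - H3M u 1 * H3f u 1 * C (H3q u 2) + X 0 * H3f u 1 * C (H3q u 3))
    + C (C (1-2*u)) * (H3M u 2 * H3f u 2 * C (H3q u 4) - X 1 * H3f u 2 * C (H3q u 5)
        - H3M u 3 * H3f u 3 * C (H3q u 6) + X 1 * H3f u 3 * C (H3q u 7))
    + C (C (3*u+1)) * (H3M u 4 * H3f u 4 * C (H3q u 8) - X 2 * H3f u 4 * C (H3q u 9)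
        - H3M u 5 * H3f u 5 * C (H3q u 10) + X 2 * H3f u 5 * C (H3q u 11)) )

/-- The form of degree 5 in `p, q, r`, linear in `y, z`. -/
def H3form {R : Type*} [CommRing R] (u y z p q r : R) : R :=
  (2+u)*(z*r^5) + 5*(y*(q*r^4)) + (10-10*u)*(z*(q^2*r^3)) - 10*u*(y*(q^3*r^2)) - 5*(z*(q^4*r))
    + (u-3)*(y*q^5) - 10*(z*(p^2*r^3)) + (10*u-10)*(y*(p^2*(q*r^2))) + 10*u*(z*(p^2*(q^2*r)))
    + 10*(y*(p^2*q^3)) + (3-u)*(z*(p^4*r)) - (2+u)*(y*(p^4*q))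

set_option maxHeartbeats 4000000 in
set_option maxRecDepth 100000 in
/-- The key identity: `2F` is a form of degree 5 in the minors `p, q, r` of the matrix with rows
`(a,b,c)`, `(x,y,z)`, with coefficients linear in `x,y,z`. -/
theorem H3_key {R : Type*} [CommRing R] (u a b c x y z : R) (hu : u ^ 2 = u + 1) :
    (3*u+1) * (
      (y+u*z) * ((y+(u-1)*z)*((x-u*z)*((x+u*z)*((x-(u-1)*y)*(x+(u-1)*y))))) * (a*(b-(u-1)*c)^4)
      - x * ((y+(u-1)*z)*((x-u*z)*((x+u*z)*((x-(u-1)*y)*(x+(u-1)*y))))) * ((b+u*c)*(b-(u-1)*c)^4)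
      - (y-u*z) * ((y-(u-1)*z)*((x-u*z)*((x+u*z)*((x-(u-1)*y)*(x+(u-1)*y))))) * (a*(b+(u-1)*c)^4)
      + x * ((y-(u-1)*z)*((x-u*z)*((x+u*z)*((x-(u-1)*y)*(x+(u-1)*y))))) * ((b-u*c)*(b+(u-1)*c)^4))
    + (1-2*u) * (
      (x-(1-u)*z) * ((y-(u-1)*z)*((y+(u-1)*z)*((x+u*z)*((x-(u-1)*y)*(x+(u-1)*y))))) * (b*(a-u*c)^4)
      - y * ((y-(u-1)*z)*((y+(u-1)*z)*((x+u*z)*((x-(u-1)*y)*(x+(u-1)*y))))) * ((a+(u-1)*c)*(a-u*c)^4)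
      - (x+(1-u)*z) * ((y-(u-1)*z)*((y+(u-1)*z)*((x-u*z)*((x-(u-1)*y)*(x+(u-1)*y))))) * (b*(a+u*c)^4)
      + y * ((y-(u-1)*z)*((y+(u-1)*z)*((x-u*z)*((x-(u-1)*y)*(x+(u-1)*y))))) * ((a-(u-1)*c)*(a+u*c)^4))
    + (3*u+1) * (
      (x+u*y) * ((y-(u-1)*z)*((y+(u-1)*z)*((x-u*z)*((x+u*z)*(x+(u-1)*y))))) * (c*(a-(u-1)*b)^4)
      - z * ((y-(u-1)*z)*((y+(u-1)*z)*((x-u*z)*((x+u*z)*(x+(u-1)*y))))) * ((a+u*b)*(a-(u-1)*b)^4)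
      - (x-u*y) * ((y-(u-1)*z)*((y+(u-1)*z)*((x-u*z)*((x+u*z)*(x-(u-1)*y))))) * (c*(a+(u-1)*b)^4)
      + z * ((y-(u-1)*z)*((y+(u-1)*z)*((x-u*z)*((x+u*z)*(x-(u-1)*y))))) * ((a-u*b)*(a+(u-1)*b)^4))
    = 2 * H3form u y z (b*z-c*y) (c*x-a*z) (a*y-b*x) := by
  have h3 : u ^ 3 = 2*u+1 := by linear_combination (u+1)*hu
  have h4 : u ^ 4 = 3*u+2 := by linear_combination u*h3+2*hu
  have h5 : u ^ 5 = 5*u+3 := by linear_combination u*h4+3*hu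
  have h6 : u ^ 6 = 8*u+5 := by linear_combination u*h5+5*hu
  have h7 : u ^ 7 = 13*u+8 := by linear_combination u*h6+8*hu
  have h8 : u ^ 8 = 21*u+13 := by linear_combination u*h7+13*hu
  have h9 : u ^ 9 = 34*u+21 := by linear_combination u*h8+21*hu
  have h10 : u ^ 10 = 55*u+34 := by linear_combination u*h9+34*hu
  rw [← sub_eq_zero]
  unfold H3form
  ring_nf
  simp only [hu, h3, h4, h5, h6, h7, h8, h9, h10]
  ring

/-- `F` in terms of the minors. -/
theorem H3F_eq (u : ℂ) (hu : u ^ 2 = u + 1) :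
    H3F u = H3form (C (C u)) (X 1) (X 2) (C (X 1) * X 2 - C (X 2) * X 1)
      (C (X 2) * X 0 - C (X 0) * X 2) (C (X 0) * X 1 - C (X 1) * X 0) := by
  have hU : (C (C u) : Sxyz) ^ 2 = C (C u) + 1 := by
    rw [← map_pow, ← map_pow, hu]; simp
  have key := H3_key (C (C u) : Sxyz) (C (X 0)) (C (X 1)) (C (X 2)) (X 0) (X 1) (X 2) hU
  have hhalf : (C (C ((1:ℂ)/2)) : Sxyz) * 2 = 1 := by
    have : (2 : Sxyz) = C (C 2) := (map_ofNat ((C : Qabc →+* Sxyz).comp C) 2).symm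
    rw [this, ← map_mul, ← map_mul]; norm_num
  have e0 : (Finset.univ.erase 0 : Finset (Fin 6)) = {1,2,3,4,5} := by decide
  have e1 : (Finset.univ.erase 1 : Finset (Fin 6)) = {0,2,3,4,5} := by decide
  have e2 : (Finset.univ.erase 2 : Finset (Fin 6)) = {0,1,3,4,5} := by decide
  have e3 : (Finset.univ.erase 3 : Finset (Fin 6)) = {0,1,2,4,5} := by decide
  have e4 : (Finset.univ.erase 4 : Finset (Fin 6)) = {0,1,2,3,5} := by decide
  have e5 : (Finset.univ.erase 5 : Finset (Fin 6)) = {0,1,2,3,4} := by decide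
  have t3 : (C (C 3) : Sxyz) = 3 := map_ofNat ((C : Qabc →+* Sxyz).comp C) 3
  have t2 : (C (C 2) : Sxyz) = 2 := map_ofNat ((C : Qabc →+* Sxyz).comp C) 2
  refine Eq.trans ?_ ((congrArg (fun t => C (C ((1:ℂ)/2)) * t) key).trans ?_)
  · unfold H3F
    simp [H3f, e0, e1, e2, e3, e4, e5, H3L, H3M, H3q, t3, t2]
  · rw [← mul_assoc, hhalf, one_mul]

/-- The ideal generated by the three minors. -/
noncomputable def H3I : Ideal Sxyz :=
  Ideal.span {C (X 1) * X 2 - C (X 2) * X 1, C (X 2) * X 0 - C (X 0) * X 2,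
    C (X 0) * X 1 - C (X 1) * X 0}

theorem H3form_mem {R : Type*} [CommRing R] (I : Ideal R) (u y z p q r : R)
    (hp : p ∈ I) (hq : q ∈ I) (hr : r ∈ I) : H3form u y z p q r ∈ I ^ 5 := by
  have m (i j k : ℕ) (h : i + (j + k) = 5) : p^i * (q^j * r^k) ∈ I ^ 5 := by
    rw [← h, pow_add, pow_add]
    exact Ideal.mul_mem_mul (Ideal.pow_mem_pow hp i)
      (Ideal.mul_mem_mul (Ideal.pow_mem_pow hq j) (Ideal.pow_mem_pow hr k))
  have e : H3form u y z p q r =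
      ((2+u)*z)*(p^0*(q^0*r^5)) + (5*y)*(p^0*(q^1*r^4)) + ((10-10*u)*z)*(p^0*(q^2*r^3))
      + (-10*u*y)*(p^0*(q^3*r^2)) + (-5*z)*(p^0*(q^4*r^1))
      + ((u-3)*y)*(p^0*(q^5*r^0)) + (-10*z)*(p^2*(q^0*r^3)) + ((10*u-10)*y)*(p^2*(q^1*r^2))
      + (10*u*z)*(p^2*(q^2*r^1)) + (10*y)*(p^2*(q^3*r^0)) + ((3-u)*z)*(p^4*(q^0*r^1))
      + (-(2+u)*y)*(p^4*(q^1*r^0)) := by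
    unfold H3form; ring
  rw [e]
  repeat' apply Ideal.add_mem
  all_goals exact Ideal.mul_mem_left _ _ (m _ _ _ (by norm_num))

/-- A derivation maps `I ^ (n+1)` into `I ^ n`. -/
theorem H3_deriv_mem {A R : Type*} [CommRing A] [CommRing R] [Algebra A R] (D : Derivation A R R)
    (I : Ideal R) (n : ℕ) : ∀ f ∈ I ^ (n+1), D f ∈ I ^ n := by
  induction n with
  | zero => intro f _; simp
  | succ n ih =>
    intro f hf
    rw [pow_succ] at hf
    refine Submodule.mul_induction_on hf ?_ ?_
    · intro g hg h hh
      rw [D.leibniz, smul_eq_mul, smul_eq_mul]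
      refine Ideal.add_mem _ (Ideal.mul_mem_right _ _ hg) ?_
      rw [pow_succ, mul_comm]
      exact Ideal.mul_mem_mul hh (ih g hg)
    · intro g h hg hh
      rw [map_add]
      exact Ideal.add_mem _ hg hh

theorem H3_iter_mem {A R : Type*} [CommRing A] [CommRing R] [Algebra A R] (D : Derivation A R R)
    (I : Ideal R) (k n : ℕ) : ∀ f ∈ I ^ (n+k), (⇑D)^[k] f ∈ I ^ n := by
  induction k with
  | zero => intro f hf; simpa using hf
  | succ k ih =>
    intro f hf
    rw [Function.iterate_succ_apply]
    exact ih _ (H3_deriv_mem D I (n+k) f hf)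

theorem H3I_eval (f : Sxyz) (hf : f ∈ H3I) :
    MvPolynomial.eval (fun i => (X i : Qabc)) f = 0 := by
  have : H3I ≤ RingHom.ker (MvPolynomial.eval (fun i => (X i : Qabc))) := by
    unfold H3I
    rw [Ideal.span_le]
    rintro g (rfl | rfl | rfl) <;> simp [RingHom.mem_ker, mul_comm]
  exact this hf

/-- `F_{Z(H₃)}` is nonzero and has multiplicity at least 5 at the general point: every
partial derivative of order at most 4 in `x,y,z`, evaluated at `(x,y,z) = (a,b,c)`, is the
zero polynomial in `ℂ[a,b,c]`. -/
theorem H3F_ne_zero_and_multiplicity_five (u : ℂ) (hu : u ^ 2 = u + 1) :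
    H3F u ≠ 0 ∧
    ∀ α₁ α₂ α₃ : ℕ, α₁ + α₂ + α₃ ≤ 4 →
      MvPolynomial.eval (fun i => (X i : Qabc))
        ((⇑(pderiv (0 : Fin 3)))^[α₁] ((⇑(pderiv (1 : Fin 3)))^[α₂]
          ((⇑(pderiv (2 : Fin 3)))^[α₃] (H3F u)))) = 0 := by
  rw [H3F_eq u hu]
  constructor
  · intro h
    have h1 := congrArg (fun f : Sxyz => MvPolynomial.eval (![0, 0, 1] : Fin 3 → ℂ)
      (MvPolynomial.eval (![1, 1, 0] : Fin 3 → Qabc) f)) h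
    simp [H3form] at h1
    ring_nf at h1
    norm_num at h1
  · intro i j k hijk
    apply H3I_eval
    have h5 := H3form_mem H3I (C (C u)) (X 1) (X 2) (C (X 1) * X 2 - C (X 2) * X 1)
      (C (X 2) * X 0 - C (X 0) * X 2) (C (X 0) * X 1 - C (X 1) * X 0)
      (Ideal.subset_span (by simp)) (Ideal.subset_span (by simp)) (Ideal.subset_span (by simp))
    have h5' := Ideal.pow_le_pow_right (I := H3I) (show 1 + i + j + k ≤ 5 by omega) h5
    have := H3_iter_mem (pderiv (0 : Fin 3)) H3I i 1 _
      (H3_iter_mem (pderiv (1 : Fin 3)) H3I j (1+i) _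
        (H3_iter_mem (pderiv (2 : Fin 3)) H3I k (1+i+j) _ h5'))
    simpa only [pow_one] using this
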